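/- arXiv:1506.05719 — 3 statements merged into one kernel-verified Lean document; each statement's English description precedes it below -/
import Mathlib

section
/- For every i, if X_i is non-empty and there exist a vertex y_i ∈ Y_i and a vertex y_{i+3} ∈ Y_{i+3}, then y_i and y_{i+3} are adjacent. -/
open SimpleGraph

/-- The claw `K_{1,3}`: vertex 0 adjacent to 1, 2, 3. -/
def claw : SimpleGraph (Fin 4) := SimpleGraph.fromRel (fun a _ => a = 0)

/-- `4K_1`: the edgeless graph on four vertices. -/
def fourK1 : SimpleGraph (Fin 4) := ⊥

/-- `K_5 - e`: the complete graph on five vertices minus the edge {0,1}. -/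
def K5e : SimpleGraph (Fin 5) :=
  SimpleGraph.fromRel (fun a b => ¬(a = 0 ∧ b = 1) ∧ ¬(a = 1 ∧ b = 0))

/-- The 5-wheel: the cycle 0-1-2-3-4-0 together with hub 5 adjacent to all. -/
def wheel5 : SimpleGraph (Fin 6) :=
  SimpleGraph.fromRel (fun a b =>
    (a ≠ 5 ∧ b ≠ 5 ∧ b.val = (a.val + 1) % 5) ∨ a = 5 ∨ b = 5)

/-- The `C_5`-twin: the cycle 0-1-2-3-4-0 together with vertex 5, a true twin
of vertex 0 (adjacent to 0, 1 and 4). -/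
def C5twin : SimpleGraph (Fin 6) :=
  SimpleGraph.fromRel (fun a b =>
    (a ≠ 5 ∧ b ≠ 5 ∧ b.val = (a.val + 1) % 5) ∨ (a = 5 ∧ (b = 0 ∨ b = 1 ∨ b = 4)))

/-- The `P_5`-twin: the path 0-1-2-3-4 together with vertex 5, a true twin of
the middle vertex 2 (adjacent to 1, 2 and 3). -/
def P5twin : SimpleGraph (Fin 6) :=
  SimpleGraph.fromRel (fun a b =>
    (a ≠ 5 ∧ b ≠ 5 ∧ b.val = a.val + 1) ∨ (a = 5 ∧ (b = 1 ∨ b = 2 ∨ b = 3)))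

/-- The chordless cycle on seven vertices. -/
def C7 : SimpleGraph (Fin 7) :=
  SimpleGraph.fromRel (fun a b => b.val = (a.val + 1) % 7)

/-- `G` is `H`-free: `G` contains no induced subgraph isomorphic to `H`,
i.e. there is no graph embedding of `H` into `G`. -/
def Free {V W : Type*} (G : SimpleGraph V) (H : SimpleGraph W) : Prop :=
  IsEmpty (H ↪g G)

/-- `X_i`: vertices outside the five-cycle `v 0, …, v 4` whose neighbours on the
cycle are exactly `v i` and `v (i+1)`. -/
def cycX {V : Type*} (G : SimpleGraph V) (v : ZMod 5 → V) (i : ZMod 5) : Set V :=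
  {w | w ∉ Set.range v ∧ ∀ j : ZMod 5, G.Adj w (v j) ↔ (j = i ∨ j = i + 1)}

/-- `Y_i`: vertices outside the five-cycle whose neighbours on the cycle are
exactly `v i, v (i+1), v (i+2), v (i+3)`. -/
def cycY {V : Type*} (G : SimpleGraph V) (v : ZMod 5 → V) (i : ZMod 5) : Set V :=
  {w | w ∉ Set.range v ∧
    ∀ j : ZMod 5, G.Adj w (v j) ↔ (j = i ∨ j = i + 1 ∨ j = i + 2 ∨ j = i + 3)}

/-- `R`: vertices outside the five-cycle with no neighbour on the cycle. -/
def cycR {V : Type*} (G : SimpleGraph V) (v : ZMod 5 → V) : Set V :=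
  {w | w ∉ Set.range v ∧ ∀ j : ZMod 5, ¬ G.Adj w (v j)}

/-!
Among three distinct neighbours of a vertex in a claw-free graph some two are adjacent. A vertex of
`X_i` and one of `Y_i` are both adjacent to `v i` but not to its neighbour `v (i - 1)`, so they are
adjacent to each other; the reflected argument at `v (i + 1)` and `v (i + 2)` joins `X_i` to
`Y_{i+3}`. Hence `v i`, `v (i + 1)` and a vertex of `X_i` form a triangle of common neighbours of
`y_i` and `y_{i+3}`, and the absence of an induced `K_5 - e` makes these two adjacent.
-/

section InducedSubgraphs

variable {V : Type*} {G : SimpleGraph V}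

lemma not_free_of_forall_lt {W : Type*} [LinearOrder W] {H : SimpleGraph W} (f : W → V)
    (hne : ∀ i j, i < j → f i ≠ f j)
    (hadj : ∀ i j, i < j → (G.Adj (f i) (f j) ↔ H.Adj i j)) : ¬ _root_.Free G H := by
  have hinj : Function.Injective f := .of_lt_imp_ne hne
  have hiff (i j : W) : G.Adj (f i) (f j) ↔ H.Adj i j := by
    rcases lt_trichotomy i j with hij | rfl | hji
    · exact hadj i j hij
    · simp only [SimpleGraph.irrefl]
    · rw [G.adj_comm, H.adj_comm, hadj j i hji]
  exact fun hfree => hfree.false ⟨⟨f, hinj⟩, hiff _ _⟩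

lemma adj_of_free_claw (hG : _root_.Free G claw) {a b c d : V}
    (hab : G.Adj a b) (hac : G.Adj a c) (had : G.Adj a d)
    (hbc : b ≠ c) (hbd : b ≠ d) (hcd : c ≠ d)
    (hnbd : ¬ G.Adj b d) (hncd : ¬ G.Adj c d) : G.Adj b c := by
  by_contra hnbc
  refine not_free_of_forall_lt ![a, b, c, d] ?_ ?_ hG
  · intro i j hij
    fin_cases i <;> fin_cases j <;> simp_all [hab.ne, hac.ne, had.ne]
  · intro i j hij
    fin_cases i <;> fin_cases j <;> simp_all [claw]

lemma adj_of_free_K5e (hG : _root_.Free G K5e) {a b : V} (hab : a ≠ b) {s : Finset V}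
    (hs : G.IsNClique 3 s) (hsab : ↑s ⊆ G.commonNeighbors a b) : G.Adj a b := by
  classical
  by_contra hnab
  obtain ⟨c, d, e, hcd, hce, hde, rfl⟩ := SimpleGraph.is3Clique_iff.1 hs
  obtain ⟨hac, hbc⟩ : G.Adj a c ∧ G.Adj b c := hsab (by simp)
  obtain ⟨had, hbd⟩ : G.Adj a d ∧ G.Adj b d := hsab (by simp)
  obtain ⟨hae, hbe⟩ : G.Adj a e ∧ G.Adj b e := hsab (by simp)
  refine not_free_of_forall_lt ![a, b, c, d, e] ?_ ?_ hG
  · intro i j hij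
    fin_cases i <;> fin_cases j <;>
      simp_all [hac.ne, had.ne, hae.ne, hbc.ne, hbd.ne, hbe.ne, hcd.ne, hce.ne, hde.ne]
  · intro i j hij
    fin_cases i <;> fin_cases j <;> simp_all [K5e]

end InducedSubgraphs

section FiveCycle

variable {V : Type*} {G : SimpleGraph V} {v : ZMod 5 → V} {i k : ZMod 5} {x y : V}

lemma ne_of_mem_cycX (hx : x ∈ cycX G v i) (j : ZMod 5) : x ≠ v j :=
  fun h => hx.1 ⟨j, h.symm⟩

lemma ne_of_mem_cycY (hy : y ∈ cycY G v i) (j : ZMod 5) : y ≠ v j :=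
  fun h => hy.1 ⟨j, h.symm⟩

lemma adj_iff_ne_of_mem_cycY (hy : y ∈ cycY G v i) (j : ZMod 5) :
    G.Adj y (v j) ↔ j ≠ i - 1 := by
  rw [hy.2 j]
  clear hy
  revert i j
  decide

lemma adj_iff_ne_of_mem_cycY_add_three (hy : y ∈ cycY G v (i + 3)) (j : ZMod 5) :
    G.Adj y (v j) ↔ j ≠ i + 2 := by
  rw [adj_iff_ne_of_mem_cycY hy, show i + 3 - 1 = i + 2 by ring]

lemma disjoint_cycX_cycY : Disjoint (cycX G v i) (cycY G v k) := by
  rw [Set.disjoint_left]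
  intro w hX hY
  have hiff (j : ZMod 5) := (hX.2 j).symm.trans (hY.2 j)
  clear hX hY
  revert i k
  decide

lemma disjoint_cycY_cycY (hik : i ≠ k) : Disjoint (cycY G v i) (cycY G v k) := by
  rw [Set.disjoint_left]
  intro w hi hk
  have hadj : G.Adj w (v (i - 1)) := (adj_iff_ne_of_mem_cycY hk _).2 (by simpa using hik)
  exact (adj_iff_ne_of_mem_cycY hi _).1 hadj rfl

lemma adj_of_mem_cycX_of_mem_cycY (hG : _root_.Free G claw)
    (hwalk : ∀ j, G.Adj (v j) (v (j + 1))) (hx : x ∈ cycX G v i) (hy : y ∈ cycY G v i) :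
    G.Adj x y := by
  have hcenter : G.Adj (v i) (v (i - 1)) := by simpa using (hwalk (i - 1)).symm
  have hxi : G.Adj x (v i) := (hx.2 i).2 (by simp)
  have hyi : G.Adj y (v i) := (adj_iff_ne_of_mem_cycY hy i).2 (by simp +decide [sub_eq_add_neg])
  have hnx : ¬ G.Adj x (v (i - 1)) := by simp +decide [hx.2, sub_eq_add_neg]
  have hny : ¬ G.Adj y (v (i - 1)) := by simp [adj_iff_ne_of_mem_cycY hy]
  exact adj_of_free_claw hG hxi.symm hyi.symm hcenter (disjoint_cycX_cycY.ne_of_mem hx hy)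
    (ne_of_mem_cycX hx _) (ne_of_mem_cycY hy _) hnx hny

lemma adj_of_mem_cycX_of_mem_cycY_add_three (hG : _root_.Free G claw)
    (hwalk : ∀ j, G.Adj (v j) (v (j + 1))) (hx : x ∈ cycX G v i) (hy : y ∈ cycY G v (i + 3)) :
    G.Adj x y := by
  have hcenter : G.Adj (v (i + 1)) (v (i + 2)) := by
    simpa only [add_assoc, one_add_one_eq_two] using hwalk (i + 1)
  have hxi : G.Adj x (v (i + 1)) := (hx.2 _).2 (by simp)
  have hyi : G.Adj y (v (i + 1)) :=
    (adj_iff_ne_of_mem_cycY_add_three hy _).2 (by simp +decide)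
  have hnx : ¬ G.Adj x (v (i + 2)) := by simp +decide [hx.2]
  have hny : ¬ G.Adj y (v (i + 2)) := by simp [adj_iff_ne_of_mem_cycY_add_three hy]
  exact adj_of_free_claw hG hxi.symm hyi.symm hcenter (disjoint_cycX_cycY.ne_of_mem hx hy)
    (ne_of_mem_cycX hx _) (ne_of_mem_cycY hy _) hnx hny

lemma isNClique_of_mem_cycX [DecidableEq V] (hwalk : ∀ j, G.Adj (v j) (v (j + 1)))
    (hx : x ∈ cycX G v i) : G.IsNClique 3 {x, v i, v (i + 1)} :=
  SimpleGraph.is3Clique_triple_iff.2 ⟨(hx.2 _).2 (.inl rfl), (hx.2 _).2 (.inr rfl), hwalk i⟩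

theorem stmt_5_general (hclaw : _root_.Free G claw) (hK5e : _root_.Free G K5e)
    (hwalk : ∀ j, G.Adj (v j) (v (j + 1))) (hX : (cycX G v i).Nonempty)
    {y₁ y₂ : V} (hy₁ : y₁ ∈ cycY G v i) (hy₂ : y₂ ∈ cycY G v (i + 3)) : G.Adj y₁ y₂ := by
  classical
  obtain ⟨x, hx⟩ := hX
  have hxy₁ : G.Adj x y₁ := adj_of_mem_cycX_of_mem_cycY hclaw hwalk hx hy₁
  have hxy₂ : G.Adj x y₂ := adj_of_mem_cycX_of_mem_cycY_add_three hclaw hwalk hx hy₂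
  have hcommon : ↑({x, v i, v (i + 1)} : Finset V) ⊆ G.commonNeighbors y₁ y₂ := by
    simp +decide [Set.insert_subset_iff, SimpleGraph.mem_commonNeighbors, hxy₁.symm, hxy₂.symm,
      hy₁.2, adj_iff_ne_of_mem_cycY_add_three hy₂]
  have hdisj : Disjoint (cycY G v i) (cycY G v (i + 3)) := disjoint_cycY_cycY (by simp +decide)
  exact adj_of_free_K5e hK5e (hdisj.ne_of_mem hy₁ hy₂) (isNClique_of_mem_cycX hwalk hx) hcommon

end FiveCycle

theorem stmt_5     {V : Type*} [Fintype V] (G : SimpleGraph V)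
    (hconn : G.Connected)
    (hclaw : _root_.Free G claw) (h4K1 : _root_.Free G fourK1) (hK5e : _root_.Free G K5e)
    (hW5 : _root_.Free G wheel5) (hC5t : _root_.Free G C5twin) (hP5t : _root_.Free G P5twin)
    (v : ZMod 5 → V) (hv : Function.Injective v)
    (hC : ∀ i j : ZMod 5, G.Adj (v i) (v j) ↔ (j = i + 1 ∨ i = j + 1)) :
    ∀ i : ZMod 5, (cycX G v i).Nonempty →
      ∀ y₁ ∈ cycY G v i, ∀ y₂ ∈ cycY G v (i + 3), G.Adj y₁ y₂ := by
  intro _ hX _ hy₁ _ hy₂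
  exact stmt_5_general hclaw hK5e (fun j => (hC j (j + 1)).2 (.inl rfl)) hX hy₁ hy₂
end

section
/- For every i, the set X_i induces a clique in G: any two distinct vertices outside C whose neighbors on C are exactly v_i and v_{i+1} are adjacent. -/
open SimpleGraph

/-! Two distinct non-adjacent vertices of `X_i` would be, together with `v_{i-1}`, the leaves of a
claw centred at `v_i`. -/

section

variable {V : Type*} {G : SimpleGraph V}

theorem nonempty_claw_embedding_of_isNIndepSet {a : V} {s : Finset V}
    (hs : G.IsNIndepSet 3 s) (hsa : ↑s ⊆ G.neighborSet a) : Nonempty (claw ↪g G) := by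
  let leaf : Fin 3 ↪ V :=
    (s.equivFinOfCardEq hs.card_eq).symm.toEmbedding.trans (.subtype (· ∈ s))
  have leaf_mem (k : Fin 3) : leaf k ∈ s := Subtype.property _
  have center_adj (k : Fin 3) : G.Adj a (leaf k) := hsa (leaf_mem k)
  have leaf_not_adj (k l : Fin 3) : ¬ G.Adj (leaf k) (leaf l) := fun h =>
    hs.isIndepSet (leaf_mem k) (leaf_mem l) h.ne h
  have hinj : Function.Injective (Fin.cons a leaf : Fin 4 → V) :=
    Fin.cons_injective_iff.2 ⟨fun ⟨k, hk⟩ => (center_adj k).ne hk.symm, leaf.injective⟩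
  refine ⟨⟨⟨Fin.cons a leaf, hinj⟩, fun {k l} => ?_⟩⟩
  cases k using Fin.cases <;> cases l using Fin.cases <;>
    simp [claw, center_adj, (center_adj _).symm, leaf_not_adj, Fin.succ_ne_zero,
      (Fin.succ_ne_zero _).symm]

theorem isClique_neighborSet_diff_of_free_claw (hclaw : _root_.Free G claw) {a b : V}
    (hab : G.Adj a b) : G.IsClique (G.neighborSet a \ insert b (G.neighborSet b)) := by
  classical
  rintro x ⟨hax, hxb⟩ y ⟨hay, hyb⟩ hxy
  by_contra hnadj
  simp only [Set.mem_insert_iff, mem_neighborSet, not_or] at hax hay hxb hyb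
  have hindep : G.IsNIndepSet 3 {b, x, y} := by
    rw [← isNClique_compl, is3Clique_triple_iff]
    exact ⟨⟨Ne.symm hxb.1, hxb.2⟩, ⟨Ne.symm hyb.1, hyb.2⟩, ⟨hxy, hnadj⟩⟩
  have hsub : ↑({b, x, y} : Finset V) ⊆ G.neighborSet a := by
    simp [Set.insert_subset_iff, hab, hax, hay]
  exact not_nonempty_iff.2 hclaw (nonempty_claw_embedding_of_isNIndepSet hindep hsub)

theorem cycX_subset_neighborSet_diff {v : ZMod 5 → V} {i j : ZMod 5} (hji : j ≠ i)
    (hji' : j ≠ i + 1) :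
    cycX G v i ⊆ G.neighborSet (v i) \ insert (v j) (G.neighborSet (v j)) := by
  rintro w ⟨hw, hwv⟩
  refine ⟨((hwv i).2 (Or.inl rfl)).symm, ?_⟩
  rintro (rfl | hjw)
  · exact hw ⟨j, rfl⟩
  · exact ((hwv j).1 hjw.symm).elim hji hji'

theorem stmt_8_general (hclaw : _root_.Free G claw) {v : ZMod 5 → V}
    (hwalk : ∀ i, G.Adj (v i) (v (i + 1))) (i : ZMod 5) : G.IsClique (cycX G v i) := by
  have hpred : G.Adj (v i) (v (i - 1)) := by simpa using (hwalk (i - 1)).symm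
  have hne : ∀ i : ZMod 5, i - 1 ≠ i ∧ i - 1 ≠ i + 1 := by decide
  exact (isClique_neighborSet_diff_of_free_claw hclaw hpred).subset
    (cycX_subset_neighborSet_diff (hne i).1 (hne i).2)

end

theorem stmt_8     {V : Type*} [Fintype V] (G : SimpleGraph V)
    (hconn : G.Connected)
    (hclaw : _root_.Free G claw) (h4K1 : _root_.Free G fourK1) (hK5e : _root_.Free G K5e)
    (hW5 : _root_.Free G wheel5) (hC5t : _root_.Free G C5twin) (hP5t : _root_.Free G P5twin)
    (v : ZMod 5 → V) (hv : Function.Injective v)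
    (hC : ∀ i j : ZMod 5, G.Adj (v i) (v j) ↔ (j = i + 1 ∨ i = j + 1)) :
    ∀ i : ZMod 5, G.IsClique (cycX G v i) := by
  exact stmt_8_general hclaw fun i => (hC i (i + 1)).2 (Or.inl rfl)
end

section
/- For every i, a vertex in X_i cannot have two non-adjacent neighbors in X − X_i: if x ∈ X_i is adjacent to vertices u, w ∈ X with u, w ∉ X_i and u ≠ w, then u and w are adjacent. -/
open SimpleGraph

/-! If `u, w` are non-adjacent neighbours of `x ∈ X_i`, then each of `v_i` and `v_{i+1}` is adjacent
to one of them, since otherwise `x` is the centre of a claw. Neither `u` nor `w` lies in `X_i`, so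
one of them, say `u`, lies in `X_{i-1}` and the other in `X_{i+1}`. Then `v_{i-2} v_{i-1} v_i x w`
is an induced path in which `u` is a true twin of the middle vertex `v_i`. -/

section Embedding

variable {V W : Type*} {G : SimpleGraph V} {H : SimpleGraph W} {f : W → V}

lemma injective_of_neighborSet_injective (hH : H.neighborSet.Injective)
    (hf : ∀ p q, G.Adj (f p) (f q) ↔ H.Adj p q) : f.Injective := fun p q hpq ↦
  hH <| Set.ext fun r ↦ by rw [mem_neighborSet, mem_neighborSet, ← hf, ← hf, hpq]

lemma adj_iff_of_forall_lt [LinearOrder W]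
    (hf : ∀ p q, p < q → (G.Adj (f p) (f q) ↔ H.Adj p q)) (p q : W) :
    G.Adj (f p) (f q) ↔ H.Adj p q := by
  rcases lt_trichotomy p q with hpq | rfl | hqp
  · exact hf p q hpq
  · simp
  · rw [G.adj_comm, H.adj_comm, hf q p hqp]

lemma adj_or_adj_or_adj_of_free_claw {x a b c : V} (hG : _root_.Free G claw)
    (hxa : G.Adj x a) (hxb : G.Adj x b) (hxc : G.Adj x c)
    (hab : a ≠ b) (hac : a ≠ c) (hbc : b ≠ c) : G.Adj a b ∨ G.Adj a c ∨ G.Adj b c := by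
  by_contra! hindep
  have hinj : Function.Injective ![x, a, b, c] := Function.Injective.of_lt_imp_ne <| by
    simp [Fin.forall_fin_succ, hxa.ne, hxb.ne, hxc.ne, hab, hac, hbc]
  refine hG.false ⟨⟨_, hinj⟩, fun {p q} ↦ adj_iff_of_forall_lt ?_ p q⟩
  simp [Fin.forall_fin_succ, claw, hxa, hxb, hxc, hindep]

lemma P5twin_neighborSet_injective : P5twin.neighborSet.Injective := by
  simp [Function.Injective, Set.ext_iff, Fin.forall_fin_succ, P5twin]

end Embedding

section FiveCycle

variable {V : Type*} {G : SimpleGraph V} {v : ZMod 5 → V} {i : ZMod 5} {u w x : V}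

lemma ne_of_mem_iUnion_cycX (hu : u ∈ ⋃ j, cycX G v j) (m : ZMod 5) : u ≠ v m := by
  obtain ⟨j, hj⟩ := Set.mem_iUnion.1 hu
  exact fun h ↦ hj.1 ⟨m, h.symm⟩

lemma mem_cycX_sub_one_of_adj (hu : u ∈ ⋃ j, cycX G v j) (hui : u ∉ cycX G v i)
    (huv : G.Adj u (v i)) : u ∈ cycX G v (i - 1) := by
  obtain ⟨j, hj⟩ := Set.mem_iUnion.1 hu
  rcases (hj.2 i).1 huv with rfl | rfl
  · exact absurd hj hui
  · rwa [add_sub_cancel_right]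

lemma mem_cycX_add_one_of_adj (hu : u ∈ ⋃ j, cycX G v j) (hui : u ∉ cycX G v i)
    (huv : G.Adj u (v (i + 1))) : u ∈ cycX G v (i + 1) := by
  obtain ⟨j, hj⟩ := Set.mem_iUnion.1 hu
  rcases (hj.2 (i + 1)).1 huv with rfl | hij
  · exact hj
  · exact absurd (add_right_cancel hij ▸ hj) hui

lemma not_adj_add_one_of_mem_cycX_sub_one (hu : u ∈ cycX G v (i - 1)) :
    ¬ G.Adj u (v (i + 1)) := by
  rw [hu.2, sub_add_cancel]
  grind

lemma adj_or_adj_of_mem_iUnion_cycX {m : ZMod 5} (hG : _root_.Free G claw)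
    (hu : u ∈ ⋃ j, cycX G v j) (hw : w ∈ ⋃ j, cycX G v j) (hne : u ≠ w) (huw : ¬ G.Adj u w)
    (hxu : G.Adj x u) (hxw : G.Adj x w) (hxv : G.Adj x (v m)) :
    G.Adj u (v m) ∨ G.Adj w (v m) :=
  (adj_or_adj_or_adj_of_free_claw hG hxu hxw hxv hne
    (ne_of_mem_iUnion_cycX hu m) (ne_of_mem_iUnion_cycX hw m)).resolve_left huw

lemma adj_of_mem_cycX_sub_one_of_mem_cycX_add_one (hG : _root_.Free G P5twin)
    (hC : ∀ i j : ZMod 5, G.Adj (v i) (v j) ↔ (j = i + 1 ∨ i = j + 1))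
    (hx : x ∈ cycX G v i) (hu : u ∈ cycX G v (i - 1)) (hw : w ∈ cycX G v (i + 1))
    (hxu : G.Adj x u) (hxw : G.Adj x w) : G.Adj u w := by
  by_contra huw
  have hpath : G.Adj (v (i - 2)) (v (i - 1)) ∧ G.Adj (v (i - 1)) (v i) ∧
      ¬ G.Adj (v (i - 2)) (v i) := by
    simp only [hC]
    grind
  have hxv : ¬ G.Adj (v (i - 2)) x ∧ ¬ G.Adj (v (i - 1)) x ∧ G.Adj (v i) x := by
    simp only [G.adj_comm _ x, hx.2]
    grind
  have huv : ¬ G.Adj (v (i - 2)) u ∧ G.Adj (v (i - 1)) u ∧ G.Adj (v i) u := by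
    simp only [G.adj_comm _ u, hu.2]
    grind
  have hwv : ¬ G.Adj (v (i - 2)) w ∧ ¬ G.Adj (v (i - 1)) w ∧ ¬ G.Adj (v i) w := by
    simp only [G.adj_comm _ w, hw.2]
    grind
  have hadj := adj_iff_of_forall_lt (G := G) (H := P5twin)
    (f := ![v (i - 2), v (i - 1), v i, x, w, u]) <| by
      simp [Fin.forall_fin_succ, P5twin, hpath, hxv, huv, hwv, hxu, hxw, G.adj_comm w u, huw]
  exact hG.false ⟨⟨_, injective_of_neighborSet_injective P5twin_neighborSet_injective hadj⟩,
    fun {p q} ↦ hadj p q⟩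

end FiveCycle

theorem stmt_15_general {V : Type*} (G : SimpleGraph V)
    (hclaw : _root_.Free G claw) (hP5t : _root_.Free G P5twin) (v : ZMod 5 → V)
    (hC : ∀ i j : ZMod 5, G.Adj (v i) (v j) ↔ (j = i + 1 ∨ i = j + 1)) :
    ∀ i : ZMod 5, ∀ x ∈ cycX G v i,
      ∀ u ∈ ⋃ j : ZMod 5, cycX G v j, ∀ w ∈ ⋃ j : ZMod 5, cycX G v j,
        u ∉ cycX G v i → w ∉ cycX G v i → u ≠ w →
          G.Adj x u → G.Adj x w → G.Adj u w := by
  intro i x hx u hu w hw hui hwi hne hxu hxw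
  by_contra huw
  have hdom {m} (hxv : G.Adj x (v m)) : G.Adj u (v m) ∨ G.Adj w (v m) :=
    adj_or_adj_of_mem_iUnion_cycX hclaw hu hw hne huw hxu hxw hxv
  wlog huv : G.Adj u (v i) generalizing u w
  · exact this w hw u hu hwi hui hne.symm hxw hxu (mt G.adj_symm huw) (fun hxv ↦ (hdom hxv).symm)
      ((hdom ((hx.2 i).2 (.inl rfl))).resolve_left huv)
  have hu' : u ∈ cycX G v (i - 1) := mem_cycX_sub_one_of_adj hu hui huv
  have hwv : G.Adj w (v (i + 1)) := (hdom ((hx.2 (i + 1)).2 (.inr rfl))).resolve_left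
    (not_adj_add_one_of_mem_cycX_sub_one hu')
  have hw' : w ∈ cycX G v (i + 1) := mem_cycX_add_one_of_adj hw hwi hwv
  exact huw (adj_of_mem_cycX_sub_one_of_mem_cycX_add_one hP5t hC hx hu' hw' hxu hxw)

theorem stmt_15     {V : Type*} [Fintype V] (G : SimpleGraph V)
    (hconn : G.Connected)
    (hclaw : _root_.Free G claw) (h4K1 : _root_.Free G fourK1) (hK5e : _root_.Free G K5e)
    (hW5 : _root_.Free G wheel5) (hC5t : _root_.Free G C5twin) (hP5t : _root_.Free G P5twin)
    (v : ZMod 5 → V) (hv : Function.Injective v)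
    (hC : ∀ i j : ZMod 5, G.Adj (v i) (v j) ↔ (j = i + 1 ∨ i = j + 1)) :
    ∀ i : ZMod 5, ∀ x ∈ cycX G v i,
      ∀ u ∈ ⋃ j : ZMod 5, cycX G v j, ∀ w ∈ ⋃ j : ZMod 5, cycX G v j,
        u ∉ cycX G v i → w ∉ cycX G v i → u ≠ w →
          G.Adj x u → G.Adj x w → G.Adj u w :=
  stmt_15_general G hclaw hP5t v hC
end
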